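/- arXiv:2501.13112 — 2 statements merged into one kernel-verified Lean document; each statement's English description precedes it below -/
import Mathlib

section
/- For every matrix A ∈ Mat(2,ℂ) one has (1/2)·Σ_μ K^μ · A · K_μ = (1/2)·Σ_μ K̃^μ · A · K̃_μ = −Ã, where the sums run over μ ∈ {0,1,2,3}. -/
open Matrix BigOperators

noncomputable section

/-- The Pauli basis of `Mat(2,ℂ)`: `σ^0 = I`, `σ^1, σ^2, σ^3` the Pauli matrices. -/
def σm : Fin 4 → Matrix (Fin 2) (Fin 2) ℂ :=
  ![1, !![0, 1; 1, 0], !![0, -Complex.I; Complex.I, 0], !![1, 0; 0, -1]]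

/-- The Minkowski matrix `η = diag(1,-1,-1,-1)`. -/
def ηm : Fin 4 → Fin 4 → ℝ := fun a b => if a = b then (if a = 0 then 1 else -1) else 0

/-- Lowered-index Pauli matrices `σ_a := Σ_b η_{ab} σ^b`. -/
def σd (a : Fin 4) : Matrix (Fin 2) (Fin 2) ℂ := ∑ b, ηm a b • σm b

/-- The conjugate matrix `M̃ := (tr M)·I − M`. -/
def mtilde (M : Matrix (Fin 2) (Fin 2) ℂ) : Matrix (Fin 2) (Fin 2) ℂ :=
  M.trace • (1 : Matrix (Fin 2) (Fin 2) ℂ) - M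

/-- The contravariant metric `g^{μν} := Σ_{a,b} y^μ_a y^ν_b η^{ab}` built from a tetrad `y`. -/
def gUp (y : Matrix (Fin 4) (Fin 4) ℝ) : Matrix (Fin 4) (Fin 4) ℝ :=
  Matrix.of fun μ ν => ∑ a, ∑ b, y μ a * y ν b * ηm a b

/-- The covariant metric `g_{μν}`, the inverse matrix of `(g^{μν})`. -/
def gDown (y : Matrix (Fin 4) (Fin 4) ℝ) : Matrix (Fin 4) (Fin 4) ℝ := (gUp y)⁻¹

/-- `K^μ := Σ_a y^μ_a σ^a ∈ Mat(2,ℂ)`. -/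
def K (y : Matrix (Fin 4) (Fin 4) ℝ) (μ : Fin 4) : Matrix (Fin 2) (Fin 2) ℂ :=
  ∑ a, y μ a • σm a

/-- `K_μ := Σ_ν g_{μν} K^ν`. -/
def Kd (y : Matrix (Fin 4) (Fin 4) ℝ) (μ : Fin 4) : Matrix (Fin 2) (Fin 2) ℂ :=
  ∑ ν, gDown y μ ν • K y ν

/-! The tetrad cancels out of the contraction over `μ`. Indeed `g = y η yᵀ` gives `yᵀ g⁻¹ y = η`,
hence `∑ μ, y^μ_a K_μ = σ_a`, and so `∑ μ, B(K^μ, K_μ) = ∑ a, B(σ^a, σ_a)` for every bilinear `B`.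
What is left is the completeness relation `∑ a, σ^a A σ_a = -2 Ã` of the Pauli matrices. The
conjugated sum reduces to the same relation because conjugation exchanges `σ^a` and `σ_a`, which
differ at most by a sign. -/

section Contraction

variable {R M N P ι κ l : Type*} [Fintype ι] [Fintype κ]
  [AddCommMonoid M] [AddCommMonoid N] [AddCommMonoid P]

theorem sum_smul_sum_smul_eq_sum_mul_smul [Semiring R] [Module R M] (X : Matrix l ι R)
    (Y : Matrix ι κ R) (v : κ → M) (i : l) :
    ∑ j, X i j • ∑ k, Y j k • v k = ∑ k, (X * Y) i k • v k := by
  simp only [Matrix.mul_apply, Finset.sum_smul, Finset.smul_sum, smul_smul]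
  exact Finset.sum_comm

theorem sum_bilin_sum_smul_left [CommSemiring R] [Module R M] [Module R N] [Module R P]
    (B : M →ₗ[R] N →ₗ[R] P) (X : Matrix ι κ R) (v : κ → M) (w : ι → N) :
    ∑ i, B (∑ k, X i k • v k) (w i) = ∑ k, B (v k) (∑ i, X i k • w i) := by
  simp only [map_sum, map_smul, LinearMap.sum_apply, LinearMap.smul_apply]
  exact Finset.sum_comm

theorem transpose_mul_inv_congruence_mul [CommRing R] [DecidableEq ι] {Y : Matrix ι ι R}
    (hY : IsUnit Y.det) (G : Matrix ι ι R) : Yᵀ * ((Y * G * Yᵀ)⁻¹ * Y) = G⁻¹ := by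
  have hYt : IsUnit Yᵀ.det := by rwa [Matrix.det_transpose]
  rw [Matrix.mul_inv_rev, Matrix.mul_inv_rev, Matrix.mul_assoc,
    Matrix.mul_nonsing_inv_cancel_left _ _ hYt, Matrix.nonsing_inv_mul_cancel_right _ _ hY]

end Contraction

theorem of_ηm_eq_diagonal : Matrix.of ηm = Matrix.diagonal fun a => ηm a a := by
  ext a b
  by_cases hab : a = b <;> simp [ηm, hab]

theorem ηm_self_mul_self (a : Fin 4) : ηm a a * ηm a a = 1 := by
  by_cases ha : a = 0 <;> simp [ηm, ha]

theorem inv_of_ηm : (Matrix.of ηm)⁻¹ = Matrix.of ηm := by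
  apply Matrix.inv_eq_left_inv
  simp only [of_ηm_eq_diagonal, Matrix.diagonal_mul_diagonal, ηm_self_mul_self, Matrix.diagonal_one]

theorem σd_eq_smul (a : Fin 4) : σd a = ηm a a • σm a := by
  simp [σd, ηm]

theorem gUp_eq_mul (y : Matrix (Fin 4) (Fin 4) ℝ) : gUp y = y * Matrix.of ηm * yᵀ := by
  ext μ ν
  simp only [gUp, Matrix.of_apply, Matrix.mul_apply, Matrix.transpose_apply, Finset.sum_mul]
  rw [Finset.sum_comm]
  simp only [mul_right_comm]

theorem sum_smul_Kd {y : Matrix (Fin 4) (Fin 4) ℝ} (hy : IsUnit y.det) (a : Fin 4) :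
    ∑ μ, y μ a • Kd y μ = σd a := by
  have hη : yᵀ * (gDown y * y) = Matrix.of ηm := by
    rw [gDown, gUp_eq_mul, transpose_mul_inv_congruence_mul hy, inv_of_ηm]
  calc ∑ μ, y μ a • Kd y μ
      = ∑ μ, yᵀ a μ • ∑ b, (gDown y * y) μ b • σm b := by
        simp only [Kd, K, sum_smul_sum_smul_eq_sum_mul_smul, Matrix.transpose_apply]
    _ = ∑ b, (yᵀ * (gDown y * y)) a b • σm b := sum_smul_sum_smul_eq_sum_mul_smul ..
    _ = σd a := by rw [hη]; rfl

theorem sum_bilin_K_Kd {P : Type*} [AddCommMonoid P] [Module ℝ P]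
    (B : Matrix (Fin 2) (Fin 2) ℂ →ₗ[ℝ] Matrix (Fin 2) (Fin 2) ℂ →ₗ[ℝ] P)
    {y : Matrix (Fin 4) (Fin 4) ℝ} (hy : IsUnit y.det) :
    ∑ μ, B (K y μ) (Kd y μ) = ∑ a, B (σm a) (σd a) := by
  simp only [K, sum_bilin_sum_smul_left, sum_smul_Kd hy]

/-- The conjugation `M ↦ M̃` as a linear map, so that it can be composed with bilinear maps. -/
def mtildeLinear : Matrix (Fin 2) (Fin 2) ℂ →ₗ[ℂ] Matrix (Fin 2) (Fin 2) ℂ where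
  toFun := mtilde
  map_add' M N := by simp only [mtilde, Matrix.trace_add, add_smul]; abel
  map_smul' c M := by simp only [mtilde, Matrix.trace_smul, smul_assoc, smul_sub, RingHom.id_apply]

/-- The bilinear map `(X, Y) ↦ X A Y`, over `ℝ` because tetrads have real entries. -/
def sandwich (A : Matrix (Fin 2) (Fin 2) ℂ) :
    Matrix (Fin 2) (Fin 2) ℂ →ₗ[ℝ] Matrix (Fin 2) (Fin 2) ℂ →ₗ[ℝ] Matrix (Fin 2) (Fin 2) ℂ :=
  LinearMap.mul ℝ _ ∘ₗ LinearMap.mulRight ℝ A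

theorem mtilde_σm (a : Fin 4) : mtilde (σm a) = σd a := by
  rw [σd_eq_smul]
  fin_cases a <;> simp [mtilde, σm, ηm, Matrix.trace_fin_two, two_smul]

theorem mtilde_mtilde (M : Matrix (Fin 2) (Fin 2) ℂ) : mtilde (mtilde M) = M := by
  simp [mtilde, Matrix.trace_sub, Matrix.trace_smul, mul_two]

theorem mtilde_σd (a : Fin 4) : mtilde (σd a) = σm a := by
  rw [← mtilde_σm, mtilde_mtilde]

theorem σd_mul_mul_σm (A : Matrix (Fin 2) (Fin 2) ℂ) (a : Fin 4) :
    σd a * A * σm a = σm a * A * σd a := by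
  simp only [σd_eq_smul, Matrix.smul_mul, Matrix.mul_smul]

theorem sum_σm_mul_mul_σd (A : Matrix (Fin 2) (Fin 2) ℂ) :
    ∑ a, σm a * A * σd a = (2 : ℂ) • -mtilde A := by
  have h₁ : σm 1 * A * σm 1 = !![A 1 1, A 1 0; A 0 1, A 0 0] := by
    rw [Matrix.eta_fin_two A]; simp [σm]
  have h₂ : σm 2 * A * σm 2 = !![A 1 1, -A 1 0; -A 0 1, A 0 0] := by
    rw [Matrix.eta_fin_two A]; simp [σm, mul_right_comm]
  have h₃ : σm 3 * A * σm 3 = !![A 0 0, -A 0 1; -A 1 0, A 1 1] := by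
    rw [Matrix.eta_fin_two A]; simp [σm]
  have h_sum : ∑ a, σm a * A * σd a =
      A - σm 1 * A * σm 1 - σm 2 * A * σm 2 - σm 3 * A * σm 3 := by
    simp [Fin.sum_univ_four, σd_eq_smul, ηm, sub_eq_add_neg, show σm 0 = 1 from rfl]
  rw [h_sum, h₁, h₂, h₃]
  ext i j
  fin_cases i <;> fin_cases j <;> simp [mtilde, Matrix.trace_fin_two] <;> ring

theorem sum_K_mul_mul_Kd {y : Matrix (Fin 4) (Fin 4) ℝ} (hy : IsUnit y.det)
    (A : Matrix (Fin 2) (Fin 2) ℂ) : ∑ μ, K y μ * A * Kd y μ = (2 : ℂ) • -mtilde A :=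
  (sum_bilin_K_Kd (sandwich A) hy).trans (sum_σm_mul_mul_σd A)

theorem sum_mtilde_K_mul_mul_mtilde_Kd {y : Matrix (Fin 4) (Fin 4) ℝ} (hy : IsUnit y.det)
    (A : Matrix (Fin 2) (Fin 2) ℂ) :
    ∑ μ, mtilde (K y μ) * A * mtilde (Kd y μ) = (2 : ℂ) • -mtilde A :=
  calc ∑ μ, mtilde (K y μ) * A * mtilde (Kd y μ)
      = ∑ a, mtilde (σm a) * A * mtilde (σd a) :=
        sum_bilin_K_Kd ((sandwich A).compl₁₂ (mtildeLinear.restrictScalars ℝ)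
          (mtildeLinear.restrictScalars ℝ)) hy
    _ = ∑ a, σm a * A * σd a := by simp only [mtilde_σm, mtilde_σd, σd_mul_mul_σm]
    _ = (2 : ℂ) • -mtilde A := sum_σm_mul_mul_σd A

/-- `(1/2)·Σ_μ K^μ A K_μ = (1/2)·Σ_μ K̃^μ A K̃_μ = −Ã` for every `A ∈ Mat(2,ℂ)`. -/
theorem K_sandwich_neg_tilde (y : Matrix (Fin 4) (Fin 4) ℝ) (hy : IsUnit y.det)
    (A : Matrix (Fin 2) (Fin 2) ℂ) :
    (1 / 2 : ℂ) • ∑ μ, K y μ * A * Kd y μ = -mtilde A ∧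
    (1 / 2 : ℂ) • ∑ μ, mtilde (K y μ) * A * mtilde (Kd y μ) = -mtilde A := by
  rw [sum_K_mul_mul_Kd hy, sum_mtilde_K_mul_mul_mtilde_Kd hy, smul_smul, one_div,
    inv_mul_cancel₀ two_ne_zero, one_smul]
  exact ⟨rfl, rfl⟩
end
end

section
/- (Flat-space form of Theorem 3.) Suppose Ψ, K^μ, A_μ, C_μ : ℝ⁴ → Mat(2,ℂ) (μ ∈ {0,1,2,3}) are differentiable, each K^μ(x) is hermitian, Σ_μ ∂_μ(tr K^μ) = 0 at every point, each A_μ(x) is anti-hermitian, and each C_μ(x) is anti-hermitian with tr C_μ(x) = 0. If the Dirac–Lanczos equation Σ_μ i·K^μ·(∂_μΨ − C_μ·Ψ + Ψ·A_μ) = 0 holds at every point of ℝ⁴, then at every point Σ_μ ( ∂_μ(Ψ†·i·K^μ·Ψ) − [A_μ, Ψ†·i·K^μ·Ψ] ) − Ψ†·( Σ_μ ( ∂_μ(π₋(i·K^μ)) − [C_μ, π₋(i·K^μ)] ) )·Ψ = 0. -/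
open Matrix BigOperators

noncomputable section

attribute [local instance] Matrix.normedAddCommGroup Matrix.normedSpace

/-- The partial derivative `∂_μ f` at `x` of a map `f : ℝ⁴ → E`. -/
def pd {E : Type*} [NormedAddCommGroup E] [NormedSpace ℝ E]
    (f : (Fin 4 → ℝ) → E) (μ : Fin 4) (x : Fin 4 → ℝ) : E :=
  fderiv ℝ f x (Pi.single μ 1)

/-- `π₊(M) := ((1/2)·tr M)·I`. -/
def πplus (M : Matrix (Fin 2) (Fin 2) ℂ) : Matrix (Fin 2) (Fin 2) ℂ :=
  ((1 / 2 : ℂ) * M.trace) • (1 : Matrix (Fin 2) (Fin 2) ℂ)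

/-- `π₋(M) := M − π₊(M)`, the traceless part of `M`. -/
def πminus (M : Matrix (Fin 2) (Fin 2) ℂ) : Matrix (Fin 2) (Fin 2) ℂ :=
  M - πplus M

/-!
For matrix-valued fields put `D F = ∂F - A F + F B`, where the connections `A` and `B` act on the
left and on the right. This derivative satisfies the Leibniz rule whenever the inner connections
match, and commutes with `ᴴ` when the connections are anti-hermitian. Hence, for `J μ = i K μ`,
`D (Ψᴴ J Ψ) = (D Ψ)ᴴ J Ψ + Ψᴴ (D J) Ψ + Ψᴴ J (D Ψ)`.
Summed over `μ`, the last term vanishes by the Dirac–Lanczos equation and the first by its adjoint,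
as `(J μ)ᴴ = -J μ`. Finally `J` may be replaced by its traceless part in `∑ D J`: the scalar part
commutes with the connection, and its divergence is zero.
-/

section MatrixCalculus

variable {𝕜 E l m n : Type*} [RCLike 𝕜] [NormedAddCommGroup E] [NormedSpace ℝ E]
  [Finite l] [Fintype m] [Finite n] {x : E}

/-- Matrix multiplication as a real bilinear map, continuous because matrices of fixed size form a
finite-dimensional space; it gives access to the product rule for rectangular matrices. -/
def matrixMulCLM : Matrix l m 𝕜 →L[ℝ] Matrix m n 𝕜 →L[ℝ] Matrix l n 𝕜 :=
  (mulLinearMap ℝ).toContinuousBilinearMap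

variable (𝕜 l n) in
/-- The adjoint `M ↦ Mᴴ` as a continuous linear map. It is only real-linear, being
conjugate-linear over `𝕜`. -/
def conjTransposeCLM : Matrix l n 𝕜 →L[ℝ] Matrix n l 𝕜 :=
  (conjTransposeAddEquiv l n 𝕜).toAddMonoidHom.toRealLinearMap continuous_id.matrix_conjTranspose

theorem differentiableAt_matrix_mul {F : E → Matrix l m 𝕜} {G : E → Matrix m n 𝕜}
    (hF : DifferentiableAt ℝ F x) (hG : DifferentiableAt ℝ G x) :
    DifferentiableAt ℝ (fun z => F z * G z) x := by
  cases nonempty_fintype l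
  cases nonempty_fintype n
  exact (matrixMulCLM.hasFDerivAt_of_bilinear hF.hasFDerivAt hG.hasFDerivAt).differentiableAt

theorem fderiv_matrix_mul_apply {F : E → Matrix l m 𝕜} {G : E → Matrix m n 𝕜}
    (hF : DifferentiableAt ℝ F x) (hG : DifferentiableAt ℝ G x) (v : E) :
    fderiv ℝ (fun z => F z * G z) x v = fderiv ℝ F x v * G x + F x * fderiv ℝ G x v := by
  cases nonempty_fintype l
  cases nonempty_fintype n
  exact (DFunLike.congr_fun (matrixMulCLM.fderiv_of_bilinear hF hG) v).trans (add_comm _ _)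

theorem differentiableAt_conjTranspose {F : E → Matrix l n 𝕜} (hF : DifferentiableAt ℝ F x) :
    DifferentiableAt ℝ (fun z => (F z)ᴴ) x := by
  cases nonempty_fintype l
  cases nonempty_fintype n
  exact (conjTransposeCLM 𝕜 l n).differentiableAt.comp x hF

theorem fderiv_conjTranspose_apply {F : E → Matrix l n 𝕜} (hF : DifferentiableAt ℝ F x) (v : E) :
    fderiv ℝ (fun z => (F z)ᴴ) x v = (fderiv ℝ F x v)ᴴ := by
  cases nonempty_fintype l
  cases nonempty_fintype n
  exact DFunLike.congr_fun ((conjTransposeCLM 𝕜 l n).hasFDerivAt.comp x hF.hasFDerivAt).fderiv v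

theorem fderiv_linearMap_apply {F G : Type*} [NormedAddCommGroup F] [NormedSpace ℝ F]
    [FiniteDimensional ℝ F] [NormedAddCommGroup G] [NormedSpace ℝ G] (L : F →ₗ[ℝ] G) {f : E → F}
    (hf : DifferentiableAt ℝ f x) (v : E) :
    fderiv ℝ (fun z => L (f z)) x v = L (fderiv ℝ f x v) :=
  DFunLike.congr_fun (L.toContinuousLinearMap.hasFDerivAt.comp x hf.hasFDerivAt).fderiv v

theorem fderiv_trace_apply {F : E → Matrix m m 𝕜} (hF : DifferentiableAt ℝ F x) (v : E) :
    fderiv ℝ (fun z => (F z).trace) x v = (fderiv ℝ F x v).trace :=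
  fderiv_linearMap_apply (traceLinearMap m ℝ 𝕜) hF v

theorem fderiv_trace_smul_apply (c : 𝕜) {F : E → Matrix m m 𝕜} (hF : DifferentiableAt ℝ F x)
    (v : E) :
    fderiv ℝ (fun z => (c • F z).trace) x v = c • fderiv ℝ (fun z => (F z).trace) x v :=
  calc
    _ = (c • fderiv ℝ F x v).trace :=
      fderiv_linearMap_apply ((traceLinearMap m 𝕜 𝕜 ∘ₗ (c • LinearMap.id)).restrictScalars ℝ) hF v
    _ = _ := by rw [trace_smul, fderiv_trace_apply hF]

end MatrixCalculus

section TracelessPart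

variable {𝕜 m : Type*} [Field 𝕜] [Fintype m] [DecidableEq m]

/-- The traceless part `M ↦ M - (tr M / card m) • 1`, extending `πminus` to matrices of any size.
It is bundled as a linear map so that it commutes with derivatives. If `card m` vanishes in `𝕜`,
then `(card m)⁻¹ = 0` and this is the identity. -/
def tracelessPart : Matrix m m 𝕜 →ₗ[𝕜] Matrix m m 𝕜 :=
  LinearMap.id - (Fintype.card m : 𝕜)⁻¹ • (traceLinearMap m 𝕜 𝕜).smulRight 1

theorem tracelessPart_apply (M : Matrix m m 𝕜) :
    tracelessPart M = M - ((Fintype.card m : 𝕜)⁻¹ * M.trace) • 1 := by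
  simp [tracelessPart, mul_smul]

theorem tracelessPart_of_trace_eq_zero {M : Matrix m m 𝕜} (hM : M.trace = 0) :
    tracelessPart M = M := by
  simp [tracelessPart_apply, hM]

theorem lie_tracelessPart (C M : Matrix m m 𝕜) : ⁅C, tracelessPart M⁆ = ⁅C, M⁆ := by
  simp [tracelessPart_apply, Ring.lie_def, mul_sub, sub_mul]

theorem πminus_eq_tracelessPart (M : Matrix (Fin 2) (Fin 2) ℂ) : πminus M = tracelessPart M := by
  simp [πminus, πplus, tracelessPart_apply]

end TracelessPart

theorem sum_conjTranspose_mul_eq_zero {R ι m n : Type*} [NonUnitalRing R] [StarRing R] [Fintype ι]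
    [Fintype m] {J : ι → Matrix m m R} {D : ι → Matrix m n R} (hJ : ∀ μ, (J μ)ᴴ = -J μ)
    (hJD : ∑ μ, J μ * D μ = 0) : ∑ μ, (D μ)ᴴ * J μ = 0 := by
  simpa [conjTranspose_sum, hJ] using congrArg conjTranspose hJD

section CovariantDerivative

variable {𝕜 E ι l m n : Type*} [RCLike 𝕜] [NormedAddCommGroup E] [NormedSpace ℝ E]
  [Fintype ι] [Fintype l] [Fintype m] [Fintype n] {x : E}

/-- The covariant derivative `∂_v F - A F + F B` at `x` of a matrix field `F` in the direction `v`,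
where `A` and `B` are the values at `x` in the direction `v` of the connections acting on the left
and on the right. The Dirac–Lanczos operator uses it with `A = C_μ` and `B = A_μ`, and the
commutator form `∂_v F - [A, F]` is the case `A = B`. -/
def covDeriv (A : Matrix m m 𝕜) (B : Matrix n n 𝕜) (F : E → Matrix m n 𝕜) (x v : E) :
    Matrix m n 𝕜 :=
  fderiv ℝ F x v - A * F x + F x * B

theorem covDeriv_self (A : Matrix m m 𝕜) (F : E → Matrix m m 𝕜) (x v : E) :
    covDeriv A A F x v = fderiv ℝ F x v - ⁅A, F x⁆ := by
  rw [covDeriv, Ring.lie_def, sub_sub_eq_add_sub, sub_add_eq_add_sub]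

theorem covDeriv_mul (A : Matrix l l 𝕜) (B : Matrix m m 𝕜) (C : Matrix n n 𝕜)
    {F : E → Matrix l m 𝕜} {G : E → Matrix m n 𝕜}
    (hF : DifferentiableAt ℝ F x) (hG : DifferentiableAt ℝ G x) (v : E) :
    covDeriv A C (fun z => F z * G z) x v =
      covDeriv A B F x v * G x + F x * covDeriv B C G x v := by
  simp only [covDeriv, fderiv_matrix_mul_apply hF hG, Matrix.add_mul, Matrix.sub_mul,
    Matrix.mul_add, Matrix.mul_sub, Matrix.mul_assoc]
  abel

theorem covDeriv_conjTranspose {A : Matrix m m 𝕜} {B : Matrix n n 𝕜} (hA : Aᴴ = -A) (hB : Bᴴ = -B)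
    {F : E → Matrix m n 𝕜} (hF : DifferentiableAt ℝ F x) (v : E) :
    covDeriv B A (fun z => (F z)ᴴ) x v = (covDeriv A B F x v)ᴴ := by
  simp only [covDeriv, fderiv_conjTranspose_apply hF, conjTranspose_add, conjTranspose_sub,
    conjTranspose_mul, hA, hB, Matrix.mul_neg, Matrix.neg_mul]
  abel

theorem covDeriv_conjTranspose_mul_mul {A : Matrix n n 𝕜} {C : Matrix m m 𝕜} (hA : Aᴴ = -A)
    (hC : Cᴴ = -C) {Ψ : E → Matrix m n 𝕜} {J : E → Matrix m m 𝕜} (hΨ : DifferentiableAt ℝ Ψ x)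
    (hJ : DifferentiableAt ℝ J x) (v : E) :
    covDeriv A A (fun z => (Ψ z)ᴴ * J z * Ψ z) x v =
      (covDeriv C A Ψ x v)ᴴ * J x * Ψ x + (Ψ x)ᴴ * covDeriv C C J x v * Ψ x +
        (Ψ x)ᴴ * (J x * covDeriv C A Ψ x v) := by
  have hΨct := differentiableAt_conjTranspose hΨ
  rw [covDeriv_mul A C A (differentiableAt_matrix_mul hΨct hJ) hΨ, covDeriv_mul A C C hΨct hJ,
    covDeriv_conjTranspose hC hA hΨ, Matrix.add_mul, Matrix.mul_assoc (Ψ x)ᴴ (J x)]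

theorem sum_covDeriv_current {A : ι → Matrix n n 𝕜} {C : ι → Matrix m m 𝕜}
    {Ψ : E → Matrix m n 𝕜} {J : ι → E → Matrix m m 𝕜} {e : ι → E}
    (hΨ : DifferentiableAt ℝ Ψ x) (hJ : ∀ μ, DifferentiableAt ℝ (J μ) x)
    (hJah : ∀ μ, (J μ x)ᴴ = -J μ x) (hA : ∀ μ, (A μ)ᴴ = -A μ) (hC : ∀ μ, (C μ)ᴴ = -C μ)
    (hDirac : ∑ μ, J μ x * covDeriv (C μ) (A μ) Ψ x (e μ) = 0) :
    ∑ μ, covDeriv (A μ) (A μ) (fun z => (Ψ z)ᴴ * J μ z * Ψ z) x (e μ) =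
      (Ψ x)ᴴ * (∑ μ, covDeriv (C μ) (C μ) (J μ) x (e μ)) * Ψ x := by
  have hDirac_adjoint := sum_conjTranspose_mul_eq_zero hJah hDirac
  calc
    _ = ∑ μ, ((covDeriv (C μ) (A μ) Ψ x (e μ))ᴴ * J μ x * Ψ x +
          (Ψ x)ᴴ * covDeriv (C μ) (C μ) (J μ) x (e μ) * Ψ x +
          (Ψ x)ᴴ * (J μ x * covDeriv (C μ) (A μ) Ψ x (e μ))) :=
      Finset.sum_congr rfl fun μ _ => covDeriv_conjTranspose_mul_mul (hA μ) (hC μ) hΨ (hJ μ) (e μ)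
    _ = _ := by
      simp only [Finset.sum_add_distrib, ← Matrix.sum_mul, ← Matrix.mul_sum, hDirac,
        hDirac_adjoint, Matrix.zero_mul, Matrix.mul_zero, zero_add, add_zero]

theorem sum_covDeriv_tracelessPart [DecidableEq m] (C : ι → Matrix m m 𝕜)
    {J : ι → E → Matrix m m 𝕜} {e : ι → E} (hJ : ∀ μ, DifferentiableAt ℝ (J μ) x)
    (hdiv : ∑ μ, fderiv ℝ (fun z => (J μ z).trace) x (e μ) = 0) :
    ∑ μ, covDeriv (C μ) (C μ) (fun z => tracelessPart (J μ z)) x (e μ) =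
      ∑ μ, covDeriv (C μ) (C μ) (J μ) x (e μ) := by
  have htrace : (∑ μ, fderiv ℝ (J μ) x (e μ)).trace = 0 := by
    simpa only [trace_sum, fderiv_trace_apply (hJ _)] using hdiv
  have hfderiv (μ : ι) : fderiv ℝ (fun z => tracelessPart (J μ z)) x (e μ) =
      tracelessPart (fderiv ℝ (J μ) x (e μ)) :=
    fderiv_linearMap_apply (tracelessPart.restrictScalars ℝ) (hJ μ) (e μ)
  simp only [covDeriv_self, hfderiv, lie_tracelessPart, Finset.sum_sub_distrib, ← map_sum,
    tracelessPart_of_trace_eq_zero htrace]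

end CovariantDerivative

theorem dirac_lanczos_current_identity_general {E ι m n : Type*} [NormedAddCommGroup E]
    [NormedSpace ℝ E] [Fintype ι] [Fintype m] [DecidableEq m] [Fintype n]
    {Ψ : E → Matrix m n ℂ} {K : ι → E → Matrix m m ℂ} {A : ι → Matrix n n ℂ}
    {C : ι → Matrix m m ℂ} {e : ι → E} {x : E}
    (hΨ : DifferentiableAt ℝ Ψ x) (hK : ∀ μ, DifferentiableAt ℝ (K μ) x)
    (hKh : ∀ μ, (K μ x)ᴴ = K μ x)
    (hdiv : ∑ μ, fderiv ℝ (fun z => (K μ z).trace) x (e μ) = 0)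
    (hA : ∀ μ, (A μ)ᴴ = -A μ) (hC : ∀ μ, (C μ)ᴴ = -C μ)
    (hDirac : ∑ μ, Complex.I • (K μ x * covDeriv (C μ) (A μ) Ψ x (e μ)) = 0) :
    ∑ μ, covDeriv (A μ) (A μ) (fun z => (Ψ z)ᴴ * (Complex.I • K μ z) * Ψ z) x (e μ) =
      (Ψ x)ᴴ * (∑ μ, covDeriv (C μ) (C μ) (fun z => tracelessPart (Complex.I • K μ z)) x (e μ)) *
        Ψ x := by
  have hIK (μ : ι) : DifferentiableAt ℝ (fun z => Complex.I • K μ z) x :=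
    (hK μ).const_smul Complex.I
  have hIK_antihermitian (μ : ι) : (Complex.I • K μ x)ᴴ = -(Complex.I • K μ x) := by
    simp [hKh]
  have hIK_div : ∑ μ, fderiv ℝ (fun z => (Complex.I • K μ z).trace) x (e μ) = 0 := by
    simp only [fderiv_trace_smul_apply _ (hK _), ← Finset.smul_sum, hdiv, smul_zero]
  rw [sum_covDeriv_tracelessPart C hIK hIK_div]
  exact sum_covDeriv_current hΨ hIK hIK_antihermitian hA hC
    (by simpa only [Matrix.smul_mul] using hDirac)

/-- Flat-space form of Theorem 3: solutions of the Dirac–Lanczos equation satisfy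
the current identity. -/
theorem dirac_lanczos_current_identity
    (Ψ : (Fin 4 → ℝ) → Matrix (Fin 2) (Fin 2) ℂ)
    (K A C : Fin 4 → (Fin 4 → ℝ) → Matrix (Fin 2) (Fin 2) ℂ)
    (hΨ : Differentiable ℝ Ψ)
    (hK : ∀ μ, Differentiable ℝ (K μ))
    (hA : ∀ μ, Differentiable ℝ (A μ))
    (hC : ∀ μ, Differentiable ℝ (C μ))
    (hKh : ∀ μ x, (K μ x)ᴴ = K μ x)
    (hdiv : ∀ x, (∑ μ, pd (fun z => (K μ z).trace) μ x) = 0)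
    (hAah : ∀ μ x, (A μ x)ᴴ = -A μ x)
    (hCah : ∀ μ x, (C μ x)ᴴ = -C μ x)
    (hCtr : ∀ μ x, (C μ x).trace = 0)
    (heq : ∀ x, (∑ μ, Complex.I • (K μ x * (pd Ψ μ x - C μ x * Ψ x + Ψ x * A μ x))) = 0) :
    ∀ x, (∑ μ, (pd (fun z => (Ψ z)ᴴ * (Complex.I • K μ z) * Ψ z) μ x
            - (A μ x * ((Ψ x)ᴴ * (Complex.I • K μ x) * Ψ x)
               - ((Ψ x)ᴴ * (Complex.I • K μ x) * Ψ x) * A μ x)))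
        - (Ψ x)ᴴ * (∑ μ, (pd (fun z => πminus (Complex.I • K μ z)) μ x
            - (C μ x * πminus (Complex.I • K μ x)
               - πminus (Complex.I • K μ x) * C μ x))) * Ψ x = 0 := by
  intro x
  simpa only [πminus_eq_tracelessPart, covDeriv_self, sub_eq_zero] using!
    dirac_lanczos_current_identity_general (e := fun μ => Pi.single μ 1) (hΨ x) (hK · x) (hKh · x)
      (hdiv x) (hAah · x) (hCah · x) (heq x)
end
end
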